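/- Let p be an odd prime, G a finite p-group, and N a normal subgroup of G which is powerful. Assume that either (a) the Schur multiplier M(G/N) is trivial, or (b) G is an internal semidirect product G = N ⋊ H for a subgroup H with exp M(H) dividing exp H. Then exp M(G) divides exp G. -/

import Mathlib

/-!
Let `p ^ k = exp G`. A class in `M(G)` is represented by a cocycle `c` with values in a finite group
`A` of roots of unity, hence by a central extension `E` of `G` by `A` which is again a finite
`p`-group. Let `M ≤ E` be the preimage of `N`. As `N` is powerful, `M' ≤ M^p Z(M)`, and `p ^ k`-th
powers of elements of `M` lie in the central subgroup `A`.

The group-theoretic core (`mul_pow_of_pow_mem_center`) is that under these conditions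
`φ : x ↦ x ^ (p ^ k)` is a homomorphism on `M`. With `D_0 = M'` and `D_{k+1} = D_k^p`, nilpotency
gives `[D_k, M] ≤ D_{k+1}`. Since `p` is odd, class-two computations then yield
`(x y)^(p^k) ≡ x^(p^k) y^(p^k)` modulo `D_k`, and show that `D_k` is generated modulo `D_{k+1}` by
the conjugates of the commutators `[x^(-p^k), y]`. The latter are trivial, so `D_k = D_k^p`, whence
`D_k = 1` in a finite `p`-group.

The homomorphism `φ : M → A` is invariant under conjugation by `E` because `A` is central, and it
restricts to the `p ^ k`-th power on `A`. Pushing `E` out along `φ` shows that `c ^ (p ^ k)` is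
cohomologous to the inflation of a cocycle `β` on `G / N` (`exists_inflation`). If `M(G/N) = 1`,
then `β` is a coboundary. If `G = N ⋊ H`, then `β`, transported to `H ≅ G / N`, is cohomologous to
the restriction of `c ^ (p ^ k)` to `H`, which is a coboundary because `exp M(H) ∣ exp H ∣ p ^ k`.
-/

def IsCocycle {G : Type*} [Group G] (α : G → G → ℂˣ) : Prop :=
  ∀ x y z : G, α x y * α (x * y) z = α x (y * z) * α y z

/-- The group of 2-cocycles on `G` with values in `ℂˣ` (trivial action). -/
def Z2 (G : Type*) [Group G] : Subgroup (G → G → ℂˣ) where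
  carrier := {α | IsCocycle α}
  one_mem' := by intro x y z; simp
  mul_mem' := by
    intro a b ha hb x y z
    simp only [Pi.mul_apply]
    rw [mul_mul_mul_comm, ha x y z, hb x y z, mul_mul_mul_comm]
  inv_mem' := by
    intro a ha x y z
    simp only [Pi.inv_apply]
    rw [← mul_inv, ha x y z, mul_inv]

/-- The group of 2-coboundaries on `G` with values in `ℂˣ`. -/
def B2 (G : Type*) [Group G] : Subgroup (G → G → ℂˣ) where
  carrier := {α | ∃ ζ : G → ℂˣ, ∀ x y : G, α x y = ζ x * ζ y * (ζ (x * y))⁻¹}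
  one_mem' := ⟨1, by simp⟩
  mul_mem' := by
    rintro a b ⟨ζ, hζ⟩ ⟨ξ, hξ⟩
    refine ⟨ζ * ξ, fun x y => ?_⟩
    simp only [Pi.mul_apply, hζ x y, hξ x y, mul_inv]
    simp only [mul_comm, mul_left_comm, mul_assoc]
  inv_mem' := by
    rintro a ⟨ζ, hζ⟩
    refine ⟨ζ⁻¹, fun x y => ?_⟩
    simp only [Pi.inv_apply, hζ x y, mul_inv, inv_inv]

/-- The Schur multiplier `M(G) = Z²(G)/B²(G)`. -/
abbrev SchurM (G : Type*) [Group G] := ↥(Z2 G) ⧸ (B2 G).subgroupOf (Z2 G)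

/-- The agemo subgroup `℧(G) = ⟨g^p : g ∈ G⟩`. -/
def agemo (p : ℕ) (G : Type*) [Group G] : Subgroup G :=
  Subgroup.closure {x : G | ∃ g : G, g ^ p = x}

/-- A `p`-group is powerful (for `p` odd) if its derived subgroup is contained in `℧(G)`. -/
def IsPowerful (p : ℕ) (G : Type*) [Group G] : Prop :=
  commutator G ≤ agemo p G

/-! ### Power structure of groups `M` with `M' ≤ M^p Z(M)` -/

section PowerStructure

open scoped commutatorElement

variable {M : Type*} [Group M]

/-- The class-two power formula `(a b)^n = a^n b^n [b⁻¹, a⁻¹]^(n choose 2)`. -/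
theorem mul_pow_of_comm_center {a b z : M} (hz : b * a = a * b * z)
    (hc : z ∈ Subgroup.center M) (n : ℕ) :
    (a * b) ^ n = a ^ n * b ^ n * z ^ (n.choose 2) := by
  have hcz : ∀ g, z * g = g * z := fun g => (Subgroup.mem_center_iff.1 hc g).symm
  have hba : ∀ n : ℕ, b ^ n * a = a * b ^ n * z ^ n := by
    intro n
    induction n with
    | zero => simp
    | succ n ih =>
      have hc' : Commute (z ^ n) b := (Commute.pow_left (hcz b) n)
      calc b ^ (n + 1) * a = b ^ n * (b * a) := by rw [pow_succ, mul_assoc]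
        _ = (b ^ n * a) * b * z := by rw [hz]; simp only [mul_assoc]
        _ = a * b ^ n * (z ^ n * b) * z := by rw [ih]; simp only [mul_assoc]
        _ = a * b ^ (n + 1) * z ^ (n + 1) := by
          rw [hc'.eq, pow_succ, pow_succ]; simp only [mul_assoc]
  induction n with
  | zero => simp
  | succ n ih =>
    have h1 : ∀ (i : ℕ) (g : M), z ^ i * g = g * z ^ i := fun i g => Commute.pow_left (hcz g) i
    have h2 : (n + 1).choose 2 = n + n.choose 2 := by
      rw [Nat.choose_succ_succ' n 1, Nat.choose_one_right]
    calc (a * b) ^ (n + 1) = a ^ n * b ^ n * z ^ (n.choose 2) * (a * b) := by rw [pow_succ, ih]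
      _ = a ^ n * (b ^ n * a) * b * z ^ (n.choose 2) := by
        rw [mul_assoc _ (z ^ _), h1]; simp only [mul_assoc]
      _ = a ^ n * a * b ^ n * (z ^ n * b) * z ^ (n.choose 2) := by
        rw [hba]; simp only [mul_assoc]
      _ = _ := by rw [h1, h2, pow_add z, pow_succ a n, pow_succ b n]; simp only [mul_assoc]

theorem mul_pow_of_comm_center_of_odd {p : ℕ} (hodd : Odd p) {a b z : M} (hz : b * a = a * b * z)
    (hc : z ∈ Subgroup.center M) (hzp : z ^ p = 1) :
    (a * b) ^ p = a ^ p * b ^ p := by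
  obtain ⟨r, rfl⟩ := hodd
  have : (2 * r + 1).choose 2 = (2 * r + 1) * r := by
    rw [Nat.choose_two_right, Nat.add_sub_cancel]
    rw [show (2 * r + 1) * (2 * r) = (2 * r + 1) * r * 2 by ring]
    simp
  rw [mul_pow_of_comm_center hz hc, this, pow_mul, hzp, one_pow, mul_one]

/-- Writing `m d m⁻¹ = d [d⁻¹, m]`, this is the class-two power formula for `m d^p m⁻¹`. -/
theorem commutator_pow_of_center {p : ℕ} (hodd : Odd p) {d m : M}
    (hc : ⁅⁅d⁻¹, m⁆⁻¹, d⁻¹⁆ ∈ Subgroup.center M) (hzp : ⁅⁅d⁻¹, m⁆⁻¹, d⁻¹⁆ ^ p = 1) :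
    ⁅(d ^ p)⁻¹, m⁆ = ⁅d⁻¹, m⁆ ^ p := by
  have h := mul_pow_of_comm_center_of_odd hodd (a := d) (b := ⁅d⁻¹, m⁆)
    (z := ⁅⁅d⁻¹, m⁆⁻¹, d⁻¹⁆) (by simp only [commutatorElement_def]; group) hc hzp
  have h2 : d * ⁅d⁻¹, m⁆ = m * d * m⁻¹ := by simp only [commutatorElement_def]; group
  rw [h2, conj_pow] at h
  rw [eq_comm, ← mul_right_inj (d ^ p), ← h]
  simp only [commutatorElement_def]; group

theorem commute_pow_of_center {p : ℕ} (hodd : Odd p) {d m : M}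
    (hc : ⁅⁅d⁻¹, m⁆⁻¹, d⁻¹⁆ ∈ Subgroup.center M) (hcp : ⁅d⁻¹, m⁆ ^ p = 1) :
    ⁅(d ^ p)⁻¹, m⁆ = 1 := by
  rw [commutator_pow_of_center hodd hc, hcp]
  generalize hz : ⁅⁅d⁻¹, m⁆⁻¹, d⁻¹⁆ = z at *
  have hconj : ⁅d⁻¹, m⁆ * z = d⁻¹ * ⁅d⁻¹, m⁆ * (d⁻¹)⁻¹ := by
    rw [← hz]; simp only [commutatorElement_def]; group
  have h1 : (⁅d⁻¹, m⁆ * z) ^ p = 1 := by rw [hconj, conj_pow, hcp]; group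
  have hcm : Commute ⁅d⁻¹, m⁆ z := Subgroup.mem_center_iff.1 hc _
  rwa [hcm.mul_pow, hcp, one_mul] at h1

/-- The subgroup `T^p` generated by the `p`-th powers of elements of `T`. -/
def powSub (p : ℕ) (T : Subgroup M) : Subgroup M :=
  Subgroup.closure {x | ∃ t ∈ T, t ^ p = x}

theorem pow_mem_powSub {p : ℕ} {T : Subgroup M} {t : M} (ht : t ∈ T) : t ^ p ∈ powSub p T :=
  Subgroup.subset_closure ⟨t, ht, rfl⟩

theorem powSub_le (p : ℕ) (T : Subgroup M) : powSub p T ≤ T := by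
  rw [powSub, Subgroup.closure_le]
  rintro _ ⟨t, ht, rfl⟩
  exact T.pow_mem ht p

instance powSub_normal (p : ℕ) (T : Subgroup M) [hT : T.Normal] : (powSub p T).Normal := by
  refine ⟨fun n hn g => ?_⟩
  have : powSub p T ≤ (powSub p T).comap (MulAut.conj g).toMonoidHom := by
    nth_rewrite 1 [powSub]
    rw [Subgroup.closure_le]
    rintro _ ⟨t, ht, rfl⟩
    simp only [Subgroup.coe_comap, Set.mem_preimage, SetLike.mem_coe]
    rw [map_pow]
    exact pow_mem_powSub (hT.conj_mem t ht g)
  exact this hn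

/-- The elements of `M` that are central modulo the normal subgroup `S`. -/
def cenMod (S : Subgroup M) [S.Normal] : Subgroup M :=
  (Subgroup.center (M ⧸ S)).comap (QuotientGroup.mk' S)

instance (S : Subgroup M) [S.Normal] : (cenMod S).Normal :=
  inferInstanceAs ((Subgroup.center (M ⧸ S)).comap (QuotientGroup.mk' S)).Normal

theorem mem_cenMod_iff {S : Subgroup M} [S.Normal] {d : M} :
    d ∈ cenMod S ↔ ∀ m, ⁅d, m⁆ ∈ S := by
  change ((d : M) : M ⧸ S) ∈ Subgroup.center (M ⧸ S) ↔ _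
  rw [Subgroup.mem_center_iff, QuotientGroup.mk_surjective.forall]
  refine forall_congr' fun m => ?_
  rw [← QuotientGroup.eq_one_iff, commutatorElement_def]
  simp only [QuotientGroup.mk_mul, QuotientGroup.mk_inv]
  rw [mul_inv_eq_one, mul_inv_eq_iff_eq_mul, eq_comm]

/-- In a nilpotent group, a subgroup `X` with `X ≤ R [X, M]` is contained in `R`: iterating the
hypothesis pushes `X` down the lower central series modulo `R`. -/
theorem le_of_le_sup_commutator [Group.IsNilpotent M] {X R : Subgroup M} [R.Normal]
    (h : X ≤ R ⊔ ⁅X, (⊤ : Subgroup M)⁆) : X ≤ R := by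
  have key : ∀ n, X ≤ R ⊔ (⊤ : Subgroup M).lowerCentralSeries n := by
    intro n
    induction n with
    | zero => simp
    | succ n ih =>
      refine h.trans (sup_le le_sup_left ?_)
      have hle : R ⊔ (⊤ : Subgroup M).lowerCentralSeries n ≤
          cenMod (R ⊔ (⊤ : Subgroup M).lowerCentralSeries (n + 1)) := by
        refine sup_le (fun r hr => mem_cenMod_iff.2 fun m => ?_)
          (fun r hr => mem_cenMod_iff.2 fun m => ?_)
        · exact Subgroup.mem_sup_left
            ((Subgroup.commutator_le_left R ⊤) (Subgroup.commutator_mem_commutator hr trivial))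
        · exact Subgroup.mem_sup_right (Subgroup.commutator_mem_commutator hr trivial)
      rw [Subgroup.commutator_le]
      intro x hx m _
      exact mem_cenMod_iff.1 (hle (ih hx)) m
  obtain ⟨n, hn⟩ := Subgroup.nilpotent_iff_lowerCentralSeries.1 ‹Group.IsNilpotent M›
  simpa [hn] using key n

theorem mk_mem_center {S : Subgroup M} [S.Normal] {d : M} (h : d ∈ cenMod S) :
    (d : M ⧸ S) ∈ Subgroup.center (M ⧸ S) := h

theorem cenMod_mono {S R : Subgroup M} [S.Normal] [R.Normal] (h : S ≤ R) : cenMod S ≤ cenMod R :=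
  fun _ hd => mem_cenMod_iff.2 fun m => h (mem_cenMod_iff.1 hd m)

theorem mk_commutator (S : Subgroup M) [S.Normal] (x y : M) :
    ((⁅x, y⁆ : M) : M ⧸ S) = ⁅(x : M ⧸ S), (y : M ⧸ S)⁆ :=
  map_commutatorElement (QuotientGroup.mk' S) x y

/-- If `T` is generated, up to `Z(M)`, by `p`-th powers of elements central modulo `T`, then
`[T, M] ≤ T^p`. By nilpotency it is enough to show `[T, M] ≤ T^p [T, M, M]`, which only needs
computations in which `[T, M]` is central. -/
theorem le_cenMod_powSub [Group.IsNilpotent M] {p : ℕ} (hodd : Odd p) (T : Subgroup M) [T.Normal]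
    (hT : T ≤ powSub p (cenMod T) ⊔ Subgroup.center M) : T ≤ cenMod (powSub p T) := by
  let X : Subgroup M := ⁅T, (⊤ : Subgroup M)⁆
  let S : Subgroup M := powSub p T ⊔ ⁅X, (⊤ : Subgroup M)⁆
  have hTS : T ≤ cenMod S := by
    refine hT.trans (sup_le ?_ ?_)
    · rw [powSub, Subgroup.closure_le]
      rintro _ ⟨d, hd, rfl⟩
      refine (Subgroup.inv_mem_iff _).1 (mem_cenMod_iff.2 fun m => ?_)
      rw [← QuotientGroup.eq_one_iff, mk_commutator, QuotientGroup.mk_inv, QuotientGroup.mk_pow]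
      have hc : ⁅d⁻¹, m⁆ ∈ T := mem_cenMod_iff.1 (inv_mem hd) m
      apply commute_pow_of_center hodd
      · rw [← QuotientGroup.mk_inv, ← mk_commutator, ← QuotientGroup.mk_inv, ← mk_commutator]
        refine mk_mem_center (mem_cenMod_iff.2 fun g => Subgroup.mem_sup_right ?_)
        exact Subgroup.commutator_mem_commutator
          (Subgroup.commutator_mem_commutator (inv_mem hc) trivial) trivial
      · rw [← QuotientGroup.mk_inv, ← mk_commutator, ← QuotientGroup.mk_pow,
          QuotientGroup.eq_one_iff]
        exact Subgroup.mem_sup_left (pow_mem_powSub hc)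
    · intro z hz
      refine mem_cenMod_iff.2 fun m => ?_
      rw [commutatorElement_eq_one_iff_mul_comm.2 (Subgroup.mem_center_iff.1 hz m).symm]
      exact one_mem _
  have hXS : X ≤ S := (Subgroup.commutator_le).2 fun t ht m _ => mem_cenMod_iff.1 (hTS ht) m
  have hXR := le_of_le_sup_commutator hXS
  exact fun t ht => mem_cenMod_iff.2 fun m => hXR (Subgroup.commutator_mem_commutator ht trivial)

/-- The series `D_0 = M'`, `D_{k+1} = D_k^p`. -/
def powSeries (p : ℕ) (M : Type*) [Group M] : ℕ → Subgroup M
  | 0 => commutator M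
  | k + 1 => powSub p (powSeries p M k)

instance powSeries_normal (p : ℕ) (k : ℕ) : (powSeries p M k).Normal := by
  induction k with
  | zero => exact inferInstanceAs (commutator M).Normal
  | succ k ih => exact powSub_normal p _

theorem powSeries_succ_le (p k : ℕ) : powSeries p M (k + 1) ≤ powSeries p M k := powSub_le _ _

theorem mem_cenMod_zero (p : ℕ) (x : M) : x ∈ cenMod (powSeries p M 0) :=
  mem_cenMod_iff.2 fun _ => Subgroup.commutator_mem_commutator trivial trivial

/-- `[D_k, M] ≤ D_{k+1}`; this is the only place where `M' ≤ M^p Z(M)` is used directly. -/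
theorem powSeries_le_cenMod [Group.IsNilpotent M] {p : ℕ} (hodd : Odd p)
    (hM : commutator M ≤ agemo p M ⊔ Subgroup.center M) (k : ℕ) :
    powSeries p M k ≤ cenMod (powSeries p M (k + 1)) := by
  induction k with
  | zero =>
    refine le_cenMod_powSub hodd (powSeries p M 0) (hM.trans (sup_le_sup_right ?_ _))
    rw [agemo, Subgroup.closure_le]
    rintro _ ⟨g, rfl⟩
    exact pow_mem_powSub (mem_cenMod_zero p g)
  | succ k ih =>
    refine le_cenMod_powSub hodd (powSeries p M (k + 1)) (le_sup_of_le_left ?_)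
    exact Subgroup.closure_mono fun x ⟨t, ht, h⟩ => ⟨t, ih ht, h⟩

theorem pow_mem_powSeries {p k : ℕ} {d : M} (hd : d ∈ powSeries p M k) :
    d ^ p ∈ powSeries p M (k + 1) := pow_mem_powSub hd

/-- `[x^(p^k), M] ≤ D_k`. -/
theorem pow_mem_cenMod [Group.IsNilpotent M] {p : ℕ} (hodd : Odd p)
    (hM : commutator M ≤ agemo p M ⊔ Subgroup.center M) (k : ℕ) (x : M) : x ^ p ^ k ∈ cenMod (powSeries p M k) := by
  induction k with
  | zero => exact mem_cenMod_zero p _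
  | succ k ih =>
    refine (Subgroup.inv_mem_iff _).1 (mem_cenMod_iff.2 fun m => ?_)
    have hc : ⁅(x ^ p ^ k)⁻¹, m⁆ ∈ powSeries p M k := mem_cenMod_iff.1 (inv_mem ih) m
    rw [← QuotientGroup.eq_one_iff, mk_commutator, QuotientGroup.mk_inv, pow_succ, pow_mul,
      QuotientGroup.mk_pow]
    apply commute_pow_of_center hodd
    · rw [← QuotientGroup.mk_inv, ← mk_commutator, ← QuotientGroup.mk_inv, ← mk_commutator]
      apply mk_mem_center
      refine powSeries_le_cenMod hodd hM k ?_
      refine Subgroup.commutator_le_left _ ⊤ (Subgroup.commutator_mem_commutator (inv_mem hc) trivial)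
    · rw [← QuotientGroup.mk_inv, ← mk_commutator, ← QuotientGroup.mk_pow,
        QuotientGroup.eq_one_iff]
      exact pow_mem_powSeries hc

/-- `(x y)^(p^k) ≡ x^(p^k) y^(p^k)` modulo `D_k`. -/
theorem mul_pow_mem [Group.IsNilpotent M] {p : ℕ} (hodd : Odd p)
    (hM : commutator M ≤ agemo p M ⊔ Subgroup.center M) (k : ℕ) (x y : M) :
    (x ^ p ^ k * y ^ p ^ k)⁻¹ * (x * y) ^ p ^ k ∈ powSeries p M k := by
  induction k with
  | zero => simp
  | succ k ih =>
    obtain ⟨d, hd⟩ : ∃ d, (x ^ p ^ k * y ^ p ^ k)⁻¹ * (x * y) ^ p ^ k = d := ⟨_, rfl⟩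
    rw [hd] at ih
    rw [inv_mul_eq_iff_eq_mul] at hd
    simp only [pow_succ, pow_mul, hd]
    generalize hx : x ^ p ^ k = a
    generalize hy : y ^ p ^ k = b
    have hb : b ∈ cenMod (powSeries p M k) := hy ▸ pow_mem_cenMod hodd hM k y
    have hz : ⁅b⁻¹, a⁻¹⁆ ∈ powSeries p M k := mem_cenMod_iff.1 (inv_mem hb) _
    rw [← QuotientGroup.eq_one_iff]
    have hcd : Commute ((a * b : M) : M ⧸ powSeries p M (k + 1)) d :=
      Subgroup.mem_center_iff.1 (mk_mem_center (powSeries_le_cenMod hodd hM k ih)) _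
    have hab := mul_pow_of_comm_center_of_odd hodd (a := (a : M ⧸ powSeries p M (k + 1)))
      (b := b) (z := (⁅b⁻¹, a⁻¹⁆ : M))
      (by rw [← QuotientGroup.mk_mul, ← QuotientGroup.mk_mul, ← QuotientGroup.mk_mul]
          congr 1; simp only [commutatorElement_def]; group)
      (mk_mem_center (powSeries_le_cenMod hodd hM k hz))
      (by rw [← QuotientGroup.mk_pow, QuotientGroup.eq_one_iff]; exact pow_mem_powSeries hz)
    rw [QuotientGroup.mk_mul, QuotientGroup.mk_inv, inv_mul_eq_one, QuotientGroup.mk_pow,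
      QuotientGroup.mk_mul _ _ d, hcd.mul_pow, ← QuotientGroup.mk_pow _ d,
      (QuotientGroup.eq_one_iff _).2 (pow_mem_powSeries ih), mul_one]
    simp only [QuotientGroup.mk_mul, QuotientGroup.mk_pow, hab]

/-- `D_k` is generated modulo `D_{k+1}` by the conjugates of the commutators `[x^(-p^k), y]`. -/
theorem powSeries_le_sup [Group.IsNilpotent M] {p : ℕ} (hodd : Odd p)
    (hM : commutator M ≤ agemo p M ⊔ Subgroup.center M) (k : ℕ) :
    powSeries p M k ≤
      Subgroup.normalClosure {c | ∃ x y : M, ⁅(x ^ p ^ k)⁻¹, y⁆ = c} ⊔ powSeries p M (k + 1) := by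
  induction k with
  | zero =>
    refine le_sup_of_le_left ?_
    refine (Subgroup.commutator_le).2 fun x _ y _ => Subgroup.subset_normalClosure ⟨x⁻¹, y, ?_⟩
    simp
  | succ k ih =>
    let V := Subgroup.normalClosure {c | ∃ x y : M, ⁅(x ^ p ^ (k + 1))⁻¹, y⁆ = c} ⊔
      powSeries p M (k + 2)
    have hcen : powSeries p M (k + 1) ≤ cenMod V :=
      (powSeries_le_cenMod hodd hM (k + 1)).trans (cenMod_mono le_sup_right)
    have hpow : ∀ d ∈ powSeries p M (k + 1), (d : M ⧸ V) ^ p = 1 := fun d hd => by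
      rw [← QuotientGroup.mk_pow, QuotientGroup.eq_one_iff]
      exact Subgroup.mem_sup_right (pow_mem_powSeries hd)
    have hcomm : ∀ d ∈ powSeries p M k, ∀ m, ⁅d, m⁆ ∈ powSeries p M (k + 1) := fun d hd =>
      mem_cenMod_iff.1 (powSeries_le_cenMod hodd hM k hd)
    -- Modulo `V` the group `D_{k+1}` is central of exponent `p` and contains `[D_k, M]`, so `p`-th
    -- powering is multiplicative on `D_k` and its kernel `K` is a subgroup.
    let K : Subgroup M :=
      { carrier := {d | d ∈ powSeries p M k ∧ (d : M ⧸ V) ^ p = 1}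
        one_mem' := ⟨one_mem _, by simp⟩
        mul_mem' := by
          rintro a b ⟨ha, ha'⟩ ⟨hb, hb'⟩
          refine ⟨mul_mem ha hb, ?_⟩
          have hz := hcomm b⁻¹ (inv_mem hb) a⁻¹
          have := mul_pow_of_comm_center_of_odd hodd (a := (a : M ⧸ V))
            (b := b) (z := (⁅b⁻¹, a⁻¹⁆ : M))
            (by rw [← QuotientGroup.mk_mul, ← QuotientGroup.mk_mul, ← QuotientGroup.mk_mul]
                congr 1; simp only [commutatorElement_def]; group)
            (mk_mem_center (hcen hz)) (hpow _ hz)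
          rw [QuotientGroup.mk_mul, this, ha', hb', one_mul]
        inv_mem' := by
          rintro a ⟨ha, ha'⟩
          exact ⟨inv_mem ha, by rw [QuotientGroup.mk_inv, inv_pow, ha', inv_one]⟩ }
    have hK : K.Normal := by
      refine ⟨fun a ha g => ⟨(powSeries_normal p k).conj_mem a ha.1 g, ?_⟩⟩
      rw [QuotientGroup.mk_mul, QuotientGroup.mk_mul, QuotientGroup.mk_inv, conj_pow, ha.2]
      simp
    have hDK : powSeries p M k ≤ K := by
      refine ih.trans (sup_le (Subgroup.normalClosure_le_normal ?_) fun d hd =>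
        ⟨powSeries_succ_le p k hd, hpow d hd⟩)
      rintro _ ⟨x, y, rfl⟩
      have hc : ⁅(x ^ p ^ k)⁻¹, y⁆ ∈ powSeries p M k :=
        mem_cenMod_iff.1 (inv_mem (pow_mem_cenMod hodd hM k x)) y
      have hz := hcomm _ (inv_mem hc) (x ^ p ^ k)⁻¹
      refine ⟨hc, ?_⟩
      rw [mk_commutator, QuotientGroup.mk_inv, ← commutator_pow_of_center hodd]
      · rw [← QuotientGroup.mk_pow, ← pow_mul, ← pow_succ, ← QuotientGroup.mk_inv,
          ← mk_commutator, QuotientGroup.eq_one_iff]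
        exact Subgroup.mem_sup_left (Subgroup.subset_normalClosure ⟨x, y, rfl⟩)
      · simp only [← QuotientGroup.mk_inv, ← mk_commutator]
        exact mk_mem_center (hcen hz)
      · simp only [← QuotientGroup.mk_inv, ← mk_commutator]
        exact hpow _ hz
    change powSub p (powSeries p M k) ≤ V
    rw [powSub, Subgroup.closure_le]
    rintro _ ⟨d, hd, rfl⟩
    have := (hDK hd).2
    rwa [← QuotientGroup.mk_pow, QuotientGroup.eq_one_iff] at this

/-- A nontrivial finite `p`-group has a normal subgroup of index `p`, which contains all `p`-th
powers. -/
theorem eq_bot_of_le_powSub [Finite M] {p : ℕ} (hp : p.Prime) (hM : IsPGroup p M)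
    {D : Subgroup M} (hD : D ≤ powSub p D) : D = ⊥ := by
  have := Fact.mk hp
  by_contra hne
  have hDp : IsPGroup p D := hM.to_subgroup D
  obtain ⟨n, hn⟩ := IsPGroup.iff_card.1 hDp
  have hn0 : n ≠ 0 := by
    rintro rfl
    exact hne (Subgroup.card_eq_one.1 (by simpa using hn))
  obtain ⟨m, rfl⟩ := Nat.exists_eq_succ_of_ne_zero hn0
  obtain ⟨K, hK⟩ := Sylow.exists_subgroup_card_pow_prime (G := D) p (n := m)
    (by rw [hn]; exact pow_dvd_pow _ (Nat.le_succ m))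
  have hidx : K.index = p := by
    have := K.card_mul_index
    rw [hK, hn, pow_succ] at this
    exact Nat.eq_of_mul_eq_mul_left (pow_pos hp.pos m) this
  have : K.Normal := by
    apply Subgroup.normal_of_index_eq_minFac_card
    rw [hidx, hn, hp.pow_minFac hn0]
  have hle : powSub p D ≤ K.map D.subtype := by
    rw [powSub, Subgroup.closure_le]
    rintro _ ⟨t, ht, rfl⟩
    refine ⟨(⟨t, ht⟩ : D) ^ p, ?_, rfl⟩
    have := Subgroup.pow_index_mem (H := K) ⟨t, ht⟩
    rwa [hidx] at this
  have htop : K = ⊤ := by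
    rw [eq_top_iff]
    intro x _
    obtain ⟨y, hy, hyx⟩ := hle (hD x.2)
    rwa [← Subtype.ext hyx]
  rw [htop, Subgroup.index_top] at hidx
  exact hp.one_lt.ne hidx

/-- If `M` is a finite `p`-group, `p` odd, with `M' ≤ M^p Z(M)` whose `p^k`-th powers are central,
then `x ↦ x^(p^k)` is a homomorphism. -/
theorem mul_pow_of_pow_mem_center [Finite M] {p : ℕ} (hp : p.Prime) (hodd : Odd p)
    (hpM : IsPGroup p M) (hM : commutator M ≤ agemo p M ⊔ Subgroup.center M) (k : ℕ)
    (hk : ∀ x : M, x ^ p ^ k ∈ Subgroup.center M) (x y : M) :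
    (x * y) ^ p ^ k = x ^ p ^ k * y ^ p ^ k := by
  have := Fact.mk hp
  have : Group.IsNilpotent M := hpM.isNilpotent
  have hW : Subgroup.normalClosure {c | ∃ x y : M, ⁅(x ^ p ^ k)⁻¹, y⁆ = c} = ⊥ := by
    rw [eq_bot_iff]
    refine Subgroup.normalClosure_le_normal ?_
    rintro _ ⟨x, y, rfl⟩
    exact commutatorElement_eq_one_iff_mul_comm.2 (Subgroup.mem_center_iff.1 (inv_mem (hk x)) y).symm
  have h1 := powSeries_le_sup hodd hM k
  rw [hW, bot_sup_eq] at h1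
  have h2 := mul_pow_mem hodd hM k x y
  rw [eq_bot_of_le_powSub hp hpM h1, Subgroup.mem_bot, inv_mul_eq_one] at h2
  exact h2.symm

end PowerStructure

/-! ### Central extensions and cocycles -/

section Extension

variable {G A : Type*} [Group G] [CommGroup A]

/-- The underlying set `G × A` of the central extension of `G` by `A` attached to a function
`c : G → G → A`; it is a group once `c` is a 2-cocycle. -/
@[ext] structure TwistedExt (c : G → G → A) where
  fst : G
  snd : A

namespace TwistedExt

variable {c : G → G → A}

theorem coc_one_left (hc : ∀ x y z : G, c x y * c (x * y) z = c x (y * z) * c y z) (x : G) :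
    c 1 x = c 1 1 := by
  have := hc 1 1 x
  simp only [one_mul] at this
  exact (mul_right_cancel this).symm

/-- The group law `(g, a) (h, b) = (g h, a b c(g, h))`. The cocycle `c` is not assumed normalized, so
the identity is `(1, c(1,1)⁻¹)`. -/
abbrev group (hc : ∀ x y z : G, c x y * c (x * y) z = c x (y * z) * c y z) :
    Group (TwistedExt c) :=
  letI : Mul (TwistedExt c) := ⟨fun g h => ⟨g.fst * h.fst, g.snd * h.snd * c g.fst h.fst⟩⟩
  letI : One (TwistedExt c) := ⟨⟨1, (c 1 1)⁻¹⟩⟩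
  letI : Inv (TwistedExt c) :=
    ⟨fun g => ⟨g.fst⁻¹, (c 1 1)⁻¹ * (c g.fst⁻¹ g.fst)⁻¹ * g.snd⁻¹⟩⟩
  Group.ofLeftAxioms
    (by
      intro x y z
      refine TwistedExt.ext (mul_assoc _ _ _) ?_
      change x.snd * y.snd * c x.fst y.fst * z.snd * c (x.fst * y.fst) z.fst =
        x.snd * (y.snd * z.snd * c y.fst z.fst) * c x.fst (y.fst * z.fst)
      calc _ = x.snd * y.snd * z.snd * (c x.fst y.fst * c (x.fst * y.fst) z.fst) := by
            simp only [mul_comm, mul_left_comm]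
        _ = _ := by rw [hc]; simp only [mul_comm, mul_left_comm])
    (by
      intro x
      refine TwistedExt.ext (one_mul _) ?_
      change (c 1 1)⁻¹ * x.snd * c 1 x.fst = x.snd
      rw [coc_one_left hc x.fst, mul_comm, mul_inv_cancel_left])
    (by
      intro x
      refine TwistedExt.ext (inv_mul_cancel _) ?_
      change (c 1 1)⁻¹ * (c x.fst⁻¹ x.fst)⁻¹ * x.snd⁻¹ * x.snd * c x.fst⁻¹ x.fst = (c 1 1)⁻¹
      rw [inv_mul_cancel_right, inv_mul_cancel_right])

end TwistedExt

end Extension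

/-- If `φ` is a conjugation-invariant homomorphism on the kernel of a surjection `ρ : E → Q`
(its values outside the kernel are irrelevant), pushing the extension `E` of `Q` out along `φ` gives
a central extension of `Q` by `ℂˣ`. Here `β` is a cocycle of that extension, and the failure of the
extension `Φ` of `φ` to be multiplicative is exactly the inflation of `β`. -/
theorem exists_transgression {E Q : Type*} [Group E] [Group Q] (ρ : E →* Q)
    (hρ : Function.Surjective ρ) (φ : E → ℂˣ)
    (hmul : ∀ m ∈ ρ.ker, ∀ n ∈ ρ.ker, φ (m * n) = φ m * φ n)
    (hconj : ∀ m ∈ ρ.ker, ∀ g, φ (g * m * g⁻¹) = φ m) :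
    ∃ (Φ : E → ℂˣ) (β : Q → Q → ℂˣ), IsCocycle β ∧
      (∀ g h, Φ (g * h) = Φ g * Φ h * β (ρ g) (ρ h)) ∧
      ∀ m ∈ ρ.ker, ∀ g, Φ (m * g) = φ m * Φ g := by
  let t : Q → E := Function.surjInv hρ
  have ht : ∀ q, ρ (t q) = q := Function.surjInv_eq hρ
  let Φ : E → ℂˣ := fun g => φ (g * (t (ρ g))⁻¹)
  let β : Q → Q → ℂˣ := fun q r => φ (t q * t r * (t (q * r))⁻¹)
  have hker : ∀ g, g * (t (ρ g))⁻¹ ∈ ρ.ker := fun g => by simp [MonoidHom.mem_ker, ht]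
  have hkerβ : ∀ q r, t q * t r * (t (q * r))⁻¹ ∈ ρ.ker := fun q r => by
    simp [MonoidHom.mem_ker, ht]
  have hΦ : ∀ g h, Φ (g * h) = Φ g * Φ h * β (ρ g) (ρ h) := by
    intro g h
    have hnorm := (MonoidHom.normal_ker ρ).conj_mem _ (hker h) (t (ρ g))
    have : g * h * (t (ρ (g * h)))⁻¹ = g * (t (ρ g))⁻¹ *
        (t (ρ g) * (h * (t (ρ h))⁻¹) * (t (ρ g))⁻¹) *
        (t (ρ g) * t (ρ h) * (t (ρ g * ρ h))⁻¹) := by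
      rw [map_mul]; group
    change φ (g * h * (t (ρ (g * h)))⁻¹) = _
    rw [this, hmul _ (mul_mem (hker g) hnorm) _ (hkerβ _ _), hmul _ (hker g) _ hnorm,
      hconj _ (hker h)]
  refine ⟨Φ, β, ?_, hΦ, ?_⟩
  · clear_value Φ β
    intro q r s
    obtain ⟨x, rfl⟩ := hρ q
    obtain ⟨y, rfl⟩ := hρ r
    obtain ⟨z, rfl⟩ := hρ s
    have h1 := hΦ (x * y) z
    have h2 := hΦ x (y * z)
    rw [hΦ x y] at h1
    rw [hΦ y z, ← mul_assoc x y z, h1, map_mul, map_mul] at h2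
    apply mul_left_cancel (a := Φ x * Φ y * Φ z)
    calc _ = Φ x * Φ y * β (ρ x) (ρ y) * Φ z * β (ρ x * ρ y) (ρ z) := by
          simp only [mul_assoc, mul_comm, mul_left_comm]
      _ = _ := by rw [h2]; simp only [mul_assoc, mul_comm, mul_left_comm]
  · intro m hm g
    have hmg : ρ (m * g) = ρ g := by rw [map_mul, MonoidHom.mem_ker.1 hm, one_mul]
    change φ (m * g * (t (ρ (m * g)))⁻¹) = φ m * φ (g * (t (ρ g))⁻¹)
    rw [hmg, mul_assoc, hmul _ hm _ (hker g)]

/-- A central extension `M` of a powerful group satisfies `M' ≤ M^p Z(M)`. -/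
theorem commutator_le_agemo_sup {M N : Type*} [Group M] [Group N] {p : ℕ} (f : M →* N)
    (hf : Function.Surjective f) (hcen : f.ker ≤ Subgroup.center M) (hN : IsPowerful p N) :
    commutator M ≤ agemo p M ⊔ Subgroup.center M := by
  have hmap : agemo p N ≤ (agemo p M).map f := by
    rw [agemo, Subgroup.closure_le]
    rintro _ ⟨g, rfl⟩
    obtain ⟨x, rfl⟩ := hf g
    exact ⟨x ^ p, Subgroup.subset_closure ⟨x, rfl⟩, map_pow f x p⟩
  have h1 : commutator M ≤ ((agemo p M).map f).comap f := by
    rw [← Subgroup.map_le_iff_le_comap]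
    refine le_trans ?_ (hN.trans hmap)
    rw [commutator_def, Subgroup.map_commutator]
    exact Subgroup.commutator_mono le_top le_top
  rw [Subgroup.comap_map_eq] at h1
  exact h1.trans (sup_le_sup_left hcen _)

/-- If `p ^ k` kills `G` and `N` is powerful, then the `p ^ k`-th power of any cocycle on `G` with
values in a finite `p`-group of units is cohomologous to the inflation of a cocycle `β` on `G / N`. -/
theorem exists_inflation {p : ℕ} (hp : p.Prime) (hodd : Odd p)
    {G A : Type*} [Group G] [Finite G] [CommGroup A] [Finite A]
    (hA : IsPGroup p A) (N : Subgroup G) [N.Normal] (hpow : IsPowerful p N) {k : ℕ}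
    (hk : ∀ g : G, g ^ p ^ k = 1) (ι : A →* ℂˣ) (c : G → G → A)
    (hc : ∀ x y z : G, c x y * c (x * y) z = c x (y * z) * c y z) :
    ∃ (Φ : G → ℂˣ) (β : G ⧸ N → G ⧸ N → ℂˣ), IsCocycle β ∧
      ∀ x y : G, ι (c x y) ^ p ^ k * Φ (x * y) = Φ x * Φ y * β x y := by
  let _ := TwistedExt.group hc
  let π : TwistedExt c →* G := ⟨⟨TwistedExt.fst, rfl⟩, fun _ _ => rfl⟩
  have hmul : ∀ g h : TwistedExt c, g * h = ⟨g.fst * h.fst, g.snd * h.snd * c g.fst h.fst⟩ :=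
    fun _ _ => rfl
  have c1 := TwistedExt.coc_one_left hc
  have c2 : ∀ x, c x 1 = c 1 1 := fun x => by
    have := hc x 1 1
    simp only [mul_one] at this
    exact mul_left_cancel this
  -- The central embedding of `A`; the factor `(c 1 1)⁻¹` makes up for `c` not being normalized.
  let i : A →* TwistedExt c :=
    ⟨⟨fun a => ⟨1, a * (c 1 1)⁻¹⟩, by
      refine TwistedExt.ext rfl ?_
      change 1 * (c 1 1)⁻¹ = (c 1 1)⁻¹
      rw [one_mul]⟩, fun a b => by
      refine TwistedExt.ext (one_mul _).symm ?_
      change a * b * (c 1 1)⁻¹ = a * (c 1 1)⁻¹ * (b * (c 1 1)⁻¹) * c 1 1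
      rw [mul_assoc (a * _), inv_mul_cancel_right]
      simp only [mul_assoc, mul_comm, mul_left_comm]⟩
  have hi_mul : ∀ a g, i a * g = ⟨g.fst, a * g.snd⟩ := fun a g => by
    refine TwistedExt.ext (one_mul _) ?_
    change a * (c 1 1)⁻¹ * g.snd * c 1 g.fst = _
    rw [c1 g.fst, mul_right_comm, inv_mul_cancel_right]
  have hmul_i : ∀ a g, g * i a = ⟨g.fst, a * g.snd⟩ := fun a g => by
    refine TwistedExt.ext (mul_one _) ?_
    change g.snd * (a * (c 1 1)⁻¹) * c g.fst 1 = _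
    rw [c2 g.fst, mul_assoc, inv_mul_cancel_right, mul_comm]
  have hi_cen : ∀ a, i a ∈ Subgroup.center (TwistedExt c) := fun a =>
    Subgroup.mem_center_iff.2 fun g => by rw [hi_mul, hmul_i]
  have hker : ∀ g, π g = 1 → g = i (g.snd * c 1 1) := fun g hg => by
    refine TwistedExt.ext hg ?_
    change g.snd = g.snd * c 1 1 * (c 1 1)⁻¹
    rw [mul_inv_cancel_right]
  have hi_val : ∀ a, (i a).snd * c 1 1 = a := fun a => inv_mul_cancel_right _ _
  have hfin : Finite (TwistedExt c) :=
    Finite.of_injective (fun g => (g.fst, g.snd)) fun g h hgh =>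
      TwistedExt.ext (congrArg Prod.fst hgh) (congrArg Prod.snd hgh)
  have hpE : IsPGroup p (TwistedExt c) := by
    intro g
    obtain ⟨r, hr⟩ := hA ((g ^ p ^ k).snd * c 1 1)
    refine ⟨k + r, ?_⟩
    rw [pow_add, pow_mul, hker (g ^ p ^ k) (by rw [map_pow, hk]), ← map_pow, hr, map_one]
  let ρ : TwistedExt c →* G ⧸ N := (QuotientGroup.mk' N).comp π
  have hπ : Function.Surjective π := fun x => ⟨⟨x, 1⟩, rfl⟩
  have hρ : Function.Surjective ρ := (QuotientGroup.mk'_surjective N).comp hπ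
  have hρN : ∀ g, g ∈ ρ.ker ↔ π g ∈ N := fun g => by
    rw [MonoidHom.mem_ker]; exact QuotientGroup.eq_one_iff (π g)
  -- `ρ.ker` is the preimage of `N`: a central extension of the powerful group `N`.
  let f : ρ.ker →* N := (π.comp ρ.ker.subtype).codRestrict N fun g => (hρN _).1 g.2
  have hf : Function.Surjective f := fun n => by
    obtain ⟨g, hg⟩ := hπ n
    exact ⟨⟨g, (hρN g).2 (hg ▸ n.2)⟩, Subtype.ext hg⟩
  have hcen1 : ∀ g : ρ.ker, π g = 1 → g ∈ Subgroup.center ρ.ker := fun g hg => by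
    refine Subgroup.mem_center_iff.2 fun h => Subtype.ext ?_
    have := hi_cen ((g : TwistedExt c).snd * c 1 1)
    rw [← hker _ hg] at this
    exact Subgroup.mem_center_iff.1 this h
  have hcen : f.ker ≤ Subgroup.center ρ.ker := fun g hg =>
    hcen1 g (congrArg Subtype.val (MonoidHom.mem_ker.1 hg))
  have key := mul_pow_of_pow_mem_center hp hodd (hpE.to_subgroup ρ.ker)
    (commutator_le_agemo_sup f hf hcen hpow) k
    (fun x => hcen1 _ (by rw [Subgroup.coe_pow, map_pow, hk]))
  -- `m ↦ m ^ p ^ k` on the preimage of `N`, with values in the central copy of `A`.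
  let φ : TwistedExt c → ℂˣ := fun m => ι ((m ^ p ^ k).snd * c 1 1)
  have hpowker : ∀ g : TwistedExt c, ∃ a, g ^ p ^ k = i a := fun g =>
    ⟨_, hker _ (by rw [map_pow, hk])⟩
  obtain ⟨Φ, β, hβ, hΦ, hΦm⟩ := exists_transgression ρ hρ φ
    (by
      intro m hm n hn
      have h := congrArg Subtype.val (key ⟨m, hm⟩ ⟨n, hn⟩)
      change (m * n) ^ p ^ k = m ^ p ^ k * n ^ p ^ k at h
      obtain ⟨a, ha⟩ := hpowker m
      obtain ⟨b, hb⟩ := hpowker n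
      change ι _ = ι _ * ι _
      rw [h, ha, hb, ← map_mul i, hi_val, hi_val, hi_val, map_mul])
    (by
      intro m _ g
      obtain ⟨a, ha⟩ := hpowker m
      change ι _ = ι _
      rw [conj_pow, ha, Subgroup.mem_center_iff.1 (hi_cen a) g, mul_inv_cancel_right])
  refine ⟨fun x => Φ ⟨x, 1⟩, β, hβ, fun x y => ?_⟩
  have h := hΦ ⟨x, 1⟩ ⟨y, 1⟩
  have hxy : (⟨x, 1⟩ * ⟨y, 1⟩ : TwistedExt c) = i (c x y) * ⟨x * y, 1⟩ := by
    rw [hmul, hi_mul]; simp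
  rw [hxy, hΦm _ ((hρN _).2 (by exact one_mem N))] at h
  have hφ : φ (i (c x y)) = ι (c x y) ^ p ^ k := by
    change ι _ = _
    rw [← map_pow, hi_val, map_pow]
  rw [hφ] at h
  exact h

/-- Every cocycle is cohomologous to one with values in the `|G|`-th roots of unity: `α ^ |G|` is the
coboundary of `x ↦ ∏ g, α x g`, and `ℂˣ` is divisible. -/
theorem exists_torsion_cocycle {G : Type*} [Group G] [Finite G] (α : G → G → ℂˣ)
    (hα : IsCocycle α) :
    ∃ (c : G → G → rootsOfUnity (Nat.card G) ℂ) (η : G → ℂˣ),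
      (∀ x y z : G, c x y * c (x * y) z = c x (y * z) * c y z) ∧
      ∀ x y, α x y = c x y * (η x * η y * (η (x * y))⁻¹) := by
  have := Fintype.ofFinite G
  let n := Nat.card G
  have hn : n ≠ 0 := Nat.card_pos.ne'
  let ζ : G → ℂˣ := fun x => ∏ g, α x g
  have hζ : ∀ x y, α x y ^ n * ζ (x * y) = ζ x * ζ y := by
    intro x y
    have h : ∏ g, (α x y * α (x * y) g) = ∏ g, (α x (y * g) * α y g) :=
      Finset.prod_congr rfl fun g _ => hα x y g
    rw [Finset.prod_mul_distrib, Finset.prod_mul_distrib, Finset.prod_const, Finset.card_univ,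
      ← Nat.card_eq_fintype_card, Fintype.prod_equiv (Equiv.mulLeft y) (fun g => α x (y * g))
      (fun g => α x g) (fun g => rfl)] at h
    exact h
  have hroot : ∀ x, ∃ u : ℂˣ, u ^ n = ζ x := fun x => by
    obtain ⟨z, hz⟩ := IsAlgClosed.exists_pow_nat_eq (ζ x : ℂ) (Nat.pos_of_ne_zero hn)
    have hz0 : z ≠ 0 := by
      rintro rfl
      rw [zero_pow hn] at hz
      exact (ζ x).ne_zero hz.symm
    exact ⟨Units.mk0 z hz0, Units.ext hz⟩
  choose η hη using hroot
  let c : G → G → ℂˣ := fun x y => α x y * (η x * η y * (η (x * y))⁻¹)⁻¹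
  have hcn : ∀ x y, c x y ∈ rootsOfUnity n ℂ := fun x y => by
    rw [mem_rootsOfUnity]
    change (α x y * (η x * η y * (η (x * y))⁻¹)⁻¹) ^ n = 1
    rw [mul_pow, inv_pow, mul_pow, mul_pow, inv_pow, hη, hη, hη, mul_inv_eq_one, ← hζ,
      mul_inv_cancel_right]
  have hB : (fun x y => (η x * η y * (η (x * y))⁻¹)⁻¹) ∈ Z2 G := by
    intro x y z
    simp only [mul_assoc x y z]
    generalize η (x * (y * z)) = f
    generalize η (x * y) = d
    generalize η (y * z) = g
    apply Additive.ofMul.injective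
    simp only [ofMul_mul, ofMul_inv]
    abel
  have hc : c ∈ Z2 G := mul_mem (show α ∈ Z2 G from hα) hB
  refine ⟨fun x y => ⟨c x y, hcn x y⟩, η, fun x y z => Subtype.ext (hc x y z), fun x y => ?_⟩
  change α x y = α x y * (η x * η y * (η (x * y))⁻¹)⁻¹ * _
  rw [inv_mul_cancel_right]

theorem mem_B2_of_inflation {G : Type*} [Group G] (N : Subgroup G) [N.Normal] {γ : G → G → ℂˣ}
    {Φ : G → ℂˣ} {β : G ⧸ N → G ⧸ N → ℂˣ}
    (h : ∀ x y : G, γ x y * Φ (x * y) = Φ x * Φ y * β x y) (hβ : β ∈ B2 (G ⧸ N)) : γ ∈ B2 G := by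
  obtain ⟨η, hη⟩ := hβ
  refine ⟨fun x => Φ x * η x, fun x y => ?_⟩
  rw [eq_mul_inv_of_mul_eq (h x y), hη]
  simp only [QuotientGroup.mk_mul, mul_inv]
  simp only [mul_comm, mul_left_comm, mul_assoc]

/-- When `H` is a complement of `N`, restriction to `H ≅ G / N` detects whether `β` is a
coboundary. -/
theorem mem_B2_of_complement {G : Type*} [Group G] (N H : Subgroup G) [N.Normal]
    (hinf : N ⊓ H = ⊥) (hsup : N ⊔ H = ⊤) {γ : G → G → ℂˣ}
    {Φ : G → ℂˣ} {β : G ⧸ N → G ⧸ N → ℂˣ}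
    (h : ∀ x y : G, γ x y * Φ (x * y) = Φ x * Φ y * β x y)
    (hγ : (fun x y : H => γ x y) ∈ B2 H) : β ∈ B2 (G ⧸ N) := by
  obtain ⟨ξ, hξ⟩ := hγ
  let f : H →* G ⧸ N := (QuotientGroup.mk' N).comp H.subtype
  have hinj : Function.Injective f := by
    rw [injective_iff_map_eq_one]
    intro a ha
    have haN : (a : G) ∈ N := (QuotientGroup.eq_one_iff _).1 ha
    have : (a : G) ∈ N ⊓ H := ⟨haN, a.2⟩
    rw [hinf, Subgroup.mem_bot] at this
    exact Subtype.ext this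
  have hsurj : Function.Surjective f := by
    intro q
    obtain ⟨g, rfl⟩ := QuotientGroup.mk_surjective q
    have hg : g ∈ N ⊔ H := hsup ▸ Subgroup.mem_top g
    obtain ⟨n, hn, a, ha, rfl⟩ := Subgroup.mem_sup_of_normal_left.1 hg
    refine ⟨⟨a, ha⟩, ?_⟩
    change (a : G ⧸ N) = _
    rw [QuotientGroup.mk_mul, (QuotientGroup.eq_one_iff n).2 hn, one_mul]
  let e : H ≃* G ⧸ N := MulEquiv.ofBijective f ⟨hinj, hsurj⟩
  refine ⟨fun q => ξ (e.symm q) * (Φ (e.symm q))⁻¹, fun q r => ?_⟩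
  obtain ⟨x, rfl⟩ := e.surjective q
  obtain ⟨y, rfl⟩ := e.surjective r
  simp only [← map_mul, e.symm_apply_apply]
  have h1 := h x y
  have h2 := hξ x y
  simp only at h2
  change β (x : G) (y : G) = _
  rw [← inv_mul_eq_iff_eq_mul] at h1
  rw [← h1, h2, Subgroup.coe_mul, mul_inv, mul_inv, inv_inv]
  simp only [mul_comm, mul_left_comm, mul_assoc]

/-- Let `p` be an odd prime, `G` a finite `p`-group and `N` a powerful
normal subgroup.  If either `M(G/N)` is trivial, or `G = N ⋊ H` with `exp M(H) ∣ exp H`,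
then `exp M(G)` divides `exp G`. -/
theorem exponent_schurMultiplier_dvd_exponent_of_powerful_kernel
    (p : ℕ) (hp : p.Prime) (hodd : Odd p)
    (G : Type*) [Group G] [Finite G] (hG : IsPGroup p G)
    (N : Subgroup G) [N.Normal] (hpow : IsPowerful p ↥N)
    (hcase : Subsingleton (SchurM (G ⧸ N)) ∨
      ∃ H : Subgroup G, N ⊓ H = ⊥ ∧ N ⊔ H = ⊤ ∧
        Monoid.exponent (SchurM ↥H) ∣ Monoid.exponent ↥H) :
    Monoid.exponent (SchurM G) ∣ Monoid.exponent G := by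
  have := Fact.mk hp
  obtain ⟨n, hn⟩ := IsPGroup.iff_card.1 hG
  obtain ⟨k, -, hk⟩ : ∃ k ≤ n, Monoid.exponent G = p ^ k :=
    (Nat.dvd_prime_pow hp).1 (hn ▸ Group.exponent_dvd_nat_card)
  have hkG : ∀ g : G, g ^ p ^ k = 1 := fun g => hk ▸ Monoid.pow_exponent_eq_one g
  refine Monoid.exponent_dvd_of_forall_pow_eq_one fun u => ?_
  obtain ⟨α, rfl⟩ := QuotientGroup.mk_surjective u
  rw [← QuotientGroup.mk_pow, QuotientGroup.eq_one_iff, Subgroup.mem_subgroupOf, hk,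
    Subgroup.coe_pow]
  obtain ⟨c, η, hc, hαc⟩ := exists_torsion_cocycle α.1 α.2
  have : NeZero (Nat.card G) := ⟨Nat.card_pos.ne'⟩
  have hA : IsPGroup p (rootsOfUnity (Nat.card G) ℂ) := fun a =>
    ⟨n, Subtype.ext (hn ▸ (mem_rootsOfUnity _ _).1 a.2)⟩
  obtain ⟨Φ, β, hβ, h⟩ := exists_inflation hp hodd hA N hpow hkG
    (rootsOfUnity (Nat.card G) ℂ).subtype c hc
  let γ : G → G → ℂˣ := fun x y => c x y
  have hγZ : γ ∈ Z2 G := fun x y z => congrArg Subtype.val (hc x y z)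
  have hγ : γ ^ p ^ k ∈ B2 G := by
    refine mem_B2_of_inflation N h ?_
    rcases hcase with hsub | ⟨H, hinf, hsup, hexp⟩
    · have h1 : ((⟨β, hβ⟩ : Z2 (G ⧸ N)) : SchurM (G ⧸ N)) = 1 := Subsingleton.elim _ _
      rwa [QuotientGroup.eq_one_iff, Subgroup.mem_subgroupOf] at h1
    · refine mem_B2_of_complement N H hinf hsup h ?_
      have hdvd : Monoid.exponent (SchurM H) ∣ p ^ k :=
        hexp.trans (hk ▸ Monoid.exponent_dvd_of_monoidHom H.subtype H.subtype_injective)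
      have h1 := Monoid.exponent_dvd_iff_forall_pow_eq_one.1 hdvd
        ((⟨fun x y => γ x y, fun x y z => hγZ x y z⟩ : Z2 H) : SchurM H)
      rw [← QuotientGroup.mk_pow, QuotientGroup.eq_one_iff, Subgroup.mem_subgroupOf,
        Subgroup.coe_pow] at h1
      exact h1
  have hα : α.1 = γ * fun x y => η x * η y * (η (x * y))⁻¹ := funext₂ hαc
  rw [hα, mul_pow]
  exact mul_mem hγ (pow_mem (show _ ∈ B2 G from ⟨η, fun _ _ => rfl⟩) _)
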